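/- Let n ≥ 1, let g and g' be invertible 2n×2n real matrices, and let s ∈ ℂⁿ be arbitrary. Then ∫_{O(2n)} Ψ_n(s, g k (g' g'ᵀ) kᵀ gᵀ) d*k = Ψ_n(s, g gᵀ) · Ψ_n(s, g' g'ᵀ). -/

import Mathlib

open MeasureTheory Matrix
open scoped BigOperators

noncomputable section

instance matrixMeasurableSpace {l : Type*} [Fintype l] : MeasurableSpace (Matrix l l ℝ) :=
  inferInstanceAs (MeasurableSpace (l → l → ℝ))

/-- The orthogonal group `O(m)` as a subtype of `m × m` real matrices. -/
abbrev OG (m : ℕ) := Matrix.orthogonalGroup (Fin m) ℝ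

/-- `t ^ w` for a real `t ≥ 0` and complex `w`, with the convention `0 ^ w = 0`. -/
def cpw (t : ℝ) (w : ℂ) : ℂ := if t = 0 then 0 else Complex.exp (w * Real.log t)

/-- The `2n × 2n` real antisymmetric matrix `D(a) = diag(a₁ J, …, aₙ J)`,
`J = [[0,1],[-1,0]]`. -/
def Dmat {n : ℕ} (a : Fin n → ℝ) : Matrix (Fin (2 * n)) (Fin (2 * n)) ℝ :=
  Matrix.of fun i j =>
    if i.val / 2 = j.val / 2 then
      a ⟨i.val / 2, by have := i.isLt; omega⟩ *
        (if i.val % 2 = 0 ∧ j.val % 2 = 1 then 1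
          else if i.val % 2 = 1 ∧ j.val % 2 = 0 then -1 else 0)
    else 0

/-- Vandermonde product `Δ_m(x) = ∏_{j<k} (x_k - x_j)`. -/
def vdm {m : ℕ} {R : Type*} [CommRing R] (x : Fin m → R) : R :=
  ∏ p ∈ Finset.univ.filter (fun p : Fin m × Fin m => p.1 < p.2), (x p.2 - x p.1)

/-- `s_{n+1} := -n-1` convention: the `j`-th exponent `(s_j - s_{j+1})/2 - 1`. -/
def expo (n : ℕ) (s : Fin n → ℂ) (j : Fin n) : ℂ :=
  (s j - (if h : j.val + 1 < n then s ⟨j.val + 1, h⟩ else -(n : ℂ) - 1)) / 2 - 1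

/-- The spherical-type group integral
`f_n(s,X) = ∫_{O(2n)} ∏_j det((kXkᵀ)_{[2j]})^{(s_j-s_{j+1})/2-1} d*k`. -/
def sphInt (n : ℕ) (μ : Measure (OG (2 * n))) (s : Fin n → ℂ)
    (X : Matrix (Fin (2 * n)) (Fin (2 * n)) ℝ) : ℂ :=
  ∫ k : OG (2 * n), ∏ j : Fin n,
    cpw ((((k : Matrix (Fin (2 * n)) (Fin (2 * n)) ℝ) * X *
        (k : Matrix (Fin (2 * n)) (Fin (2 * n)) ℝ)ᵀ).submatrix
          (Fin.castLE (by have := j.isLt; omega : 2 * (j.val + 1) ≤ 2 * n))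
          (Fin.castLE (by have := j.isLt; omega : 2 * (j.val + 1) ≤ 2 * n))).det)
      (expo n s j) ∂μ



lemma aux_cpw_mul (a b : ℝ) (w : ℂ) : cpw (a * b) w = cpw a w * cpw b w := by
  unfold cpw
  by_cases ha : a = 0
  · simp [ha]
  by_cases hb : b = 0
  · simp [hb]
  rw [if_neg (mul_ne_zero ha hb), if_neg ha, if_neg hb, Real.log_mul ha hb, ← Complex.exp_add]
  push_cast
  ring_nf

lemma aux_cpw_one (w : ℂ) : cpw 1 w = 1 := by
  simp [cpw]

/-- The integrand. -/
def auxP (n : ℕ) (s : Fin n → ℂ) (X : Matrix (Fin (2 * n)) (Fin (2 * n)) ℝ) : ℂ :=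
  ∏ j : Fin n,
    cpw ((X.submatrix
          (Fin.castLE (by have := j.isLt; omega : 2 * (j.val + 1) ≤ 2 * n))
          (Fin.castLE (by have := j.isLt; omega : 2 * (j.val + 1) ≤ 2 * n))).det)
      (expo n s j)

lemma aux_tri {N m : ℕ} (h : m ≤ N) (T M : Matrix (Fin N) (Fin N) ℝ)
    (hT : ∀ i j, i < j → T i j = 0) :
    (T * M).submatrix (Fin.castLE h) (Fin.castLE h) =
      T.submatrix (Fin.castLE h) (Fin.castLE h) * M.submatrix (Fin.castLE h) (Fin.castLE h) := by
  ext i j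
  simp only [submatrix_apply, mul_apply]
  symm
  refine Fintype.sum_of_injective (Fin.castLE h) (Fin.castLE_injective h) _ _ ?_ ?_
  · intro x hx
    rw [hT, zero_mul]
    by_contra hc
    apply hx
    refine ⟨⟨x.val, ?_⟩, by ext; simp⟩
    have h1 : x.val ≤ i.val := by simpa [Fin.lt_def] using hc
    omega
  · intro y
    rfl

lemma aux_tri2 {N m : ℕ} (h : m ≤ N) (T X : Matrix (Fin N) (Fin N) ℝ)
    (hT : ∀ i j, i < j → T i j = 0) :
    ((T * X * Tᵀ).submatrix (Fin.castLE h) (Fin.castLE h)).det =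
      (T.submatrix (Fin.castLE h) (Fin.castLE h)).det ^ 2 *
        (X.submatrix (Fin.castLE h) (Fin.castLE h)).det := by
  have e : T * X * Tᵀ = T * (T * Xᵀ)ᵀ := by
    simp [Matrix.mul_assoc, transpose_mul]
  rw [e, aux_tri h _ _ hT, ← transpose_submatrix, aux_tri h _ _ hT, det_mul, det_transpose,
    det_mul, ← transpose_submatrix, det_transpose]
  ring

/-- The multiplier. -/
def auxC (n : ℕ) (s : Fin n → ℂ) (T : Matrix (Fin (2 * n)) (Fin (2 * n)) ℝ) : ℂ :=
  ∏ j : Fin n,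
    cpw ((T.submatrix
          (Fin.castLE (by have := j.isLt; omega : 2 * (j.val + 1) ≤ 2 * n))
          (Fin.castLE (by have := j.isLt; omega : 2 * (j.val + 1) ≤ 2 * n))).det ^ 2)
      (expo n s j)

lemma auxP_tri (n : ℕ) (s : Fin n → ℂ) (T X : Matrix (Fin (2 * n)) (Fin (2 * n)) ℝ)
    (hT : ∀ i j, i < j → T i j = 0) :
    auxP n s (T * X * Tᵀ) = auxC n s T * auxP n s X := by
  unfold auxP auxC
  rw [← Finset.prod_mul_distrib]
  refine Finset.prod_congr rfl fun j _ => ?_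
  rw [aux_tri2 _ _ _ hT, aux_cpw_mul]

lemma auxP_one (n : ℕ) (s : Fin n → ℂ) : auxP n s 1 = 1 := by
  unfold auxP
  refine Finset.prod_eq_one fun j _ => ?_
  rw [submatrix_one _ (Fin.castLE_injective _), det_one, aux_cpw_one]

lemma aux_posDef {N : ℕ} (A : Matrix (Fin N) (Fin N) ℝ) (hA : IsUnit A) :
    (A * Aᵀ).PosDef := by
  have := PosDef.mul_conjTranspose_self A (vecMul_injective_of_isUnit hA)
  simpa using this

lemma aux_lq {N : ℕ} (A : Matrix (Fin N) (Fin N) ℝ) (hA : IsUnit A) :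
    ∃ T : Matrix (Fin N) (Fin N) ℝ, (∀ i j, i < j → T i j = 0) ∧
      T * (A * Aᵀ) * Tᵀ = 1 := by
  have hS := aux_posDef A hA
  have hD : (LDL.diag hS).PosDef := by
    rw [LDL.diag_eq_lowerInv_conj]
    exact hS.mul_mul_conjTranspose_same
      (vecMul_injective_of_isUnit (isUnit_of_invertible (LDL.lowerInv hS)))
  have hpos : ∀ i, 0 < LDL.diagEntries hS i := posDef_diagonal_iff.1 hD
  refine ⟨diagonal (fun i => (Real.sqrt (LDL.diagEntries hS i))⁻¹) * LDL.lowerInv hS, ?_, ?_⟩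
  · intro i j hij
    rw [diagonal_mul, LDL.lowerInv_triangular hS hij, mul_zero]
  · have e := LDL.diag_eq_lowerInv_conj hS
    rw [conjTranspose_eq_transpose_of_trivial] at e
    rw [transpose_mul, diagonal_transpose]
    rw [show ∀ D L S : Matrix (Fin N) (Fin N) ℝ, D * L * S * (Lᵀ * D) = D * (L * S * Lᵀ) * D from
      fun D L S => by simp only [Matrix.mul_assoc], ← e, LDL.diag, diagonal_mul_diagonal,
      diagonal_mul_diagonal, ← diagonal_one]
    congr 1
    ext i
    have h1 := Real.sqrt_pos.2 (hpos i)
    have h2 := Real.mul_self_sqrt (hpos i).le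
    field_simp
    nlinarith

lemma auxP_factor (n : ℕ) (s : Fin n → ℂ) (A : Matrix (Fin (2 * n)) (Fin (2 * n)) ℝ)
    (hA : IsUnit A) : ∃ q : OG (2 * n), ∀ S : Matrix (Fin (2 * n)) (Fin (2 * n)) ℝ,
      auxP n s (A * S * Aᵀ) = auxP n s (A * Aᵀ) *
        auxP n s ((q : Matrix (Fin (2 * n)) (Fin (2 * n)) ℝ) * S *
          (q : Matrix (Fin (2 * n)) (Fin (2 * n)) ℝ)ᵀ) := by
  obtain ⟨T, hT, h1⟩ := aux_lq A hA
  refine ⟨⟨T * A, ?_⟩, ?_⟩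
  · rw [mem_orthogonalGroup_iff,
      transpose_mul, ← h1]
    simp only [Matrix.mul_assoc]
  · intro S
    have h2 := auxP_tri n s T (A * Aᵀ) hT
    rw [h1, auxP_one] at h2
    have h3 := auxP_tri n s T (A * S * Aᵀ) hT
    have e : T * A * S * (T * A)ᵀ = T * (A * S * Aᵀ) * Tᵀ := by
      simp only [transpose_mul, Matrix.mul_assoc]
    simp only [e, h3]
    rw [← mul_assoc, mul_comm (auxP n s (A * Aᵀ)), ← h2, one_mul]

lemma auxP_cont (n : ℕ) (s : Fin n → ℂ) {Y : Type*} [TopologicalSpace Y]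
    (F : Y → Matrix (Fin (2 * n)) (Fin (2 * n)) ℝ) (hF : Continuous F)
    (hu : ∀ y, IsUnit (F y)) : Continuous fun y => auxP n s (F y * (F y)ᵀ) := by
  unfold auxP
  refine continuous_finsetProd _ fun j _ => ?_
  have hne : ∀ y, (((F y * (F y)ᵀ).submatrix
          (Fin.castLE (by have := j.isLt; omega : 2 * (j.val + 1) ≤ 2 * n))
          (Fin.castLE (by have := j.isLt; omega : 2 * (j.val + 1) ≤ 2 * n))).det) ≠ 0 := fun y =>
    ((aux_posDef _ (hu y)).submatrix (Fin.castLE_injective _)).det_pos.ne'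
  simp only [cpw, if_neg (hne _)]
  refine Complex.continuous_exp.comp (continuous_const.mul (Complex.continuous_ofReal.comp ?_))
  refine Continuous.log ?_ hne
  exact ((hF.matrix_mul hF.matrix_transpose).matrix_submatrix _ _).matrix_det

instance auxBorelMat (m : ℕ) : BorelSpace (Matrix (Fin m) (Fin m) ℝ) :=
  inferInstanceAs (BorelSpace (Fin m → Fin m → ℝ))

instance auxSC (m : ℕ) : SecondCountableTopology (Matrix (Fin m) (Fin m) ℝ) :=
  inferInstanceAs (SecondCountableTopology (Fin m → Fin m → ℝ))

instance auxBorelOG (m : ℕ) : BorelSpace (OG m) :=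
  Subtype.borelSpace (α := Matrix (Fin m) (Fin m) ℝ) _

instance auxSCOG (m : ℕ) : SecondCountableTopology (OG m) :=
  TopologicalSpace.Subtype.secondCountableTopology (α := Matrix (Fin m) (Fin m) ℝ) _

instance auxCompactOG (m : ℕ) : CompactSpace (OG m) := by
  refine isCompact_iff_compactSpace.1 (?_ : IsCompact (unitary (Matrix (Fin m) (Fin m) ℝ) : Set (Matrix (Fin m) (Fin m) ℝ)))
  have hK : IsCompact (Set.pi Set.univ fun _ : Fin m => Set.pi Set.univ fun _ : Fin m =>
      Metric.closedBall (0 : ℝ) 1) :=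
    isCompact_univ_pi fun _ => isCompact_univ_pi fun _ => isCompact_closedBall _ _
  refine IsCompact.of_isClosed_subset hK isClosed_unitary ?_
  intro U hU i _ j _
  simpa using entry_norm_bound_of_unitary (𝕜 := ℝ) hU i j

lemma aux_unit {m : ℕ} (k : OG m) : IsUnit (k : Matrix (Fin m) (Fin m) ℝ) :=
  (Unitary.toUnits k).isUnit

/-- Lemma 2.5, Eq. (2.15): factorization
`∫_K Ψ_n(s, g k (g'g'ᵀ) kᵀ gᵀ) d*k = Ψ_n(s, ggᵀ) Ψ_n(s, g'g'ᵀ)`. -/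
theorem spherical_factorization_Psi (n : ℕ) (hn : 1 ≤ n)
    (μ : Measure (OG (2 * n))) (hμ : μ.IsHaarMeasure) (hμ1 : IsProbabilityMeasure μ)
    (g g' : Matrix (Fin (2 * n)) (Fin (2 * n)) ℝ) (hg : IsUnit g) (hg' : IsUnit g')
    (s : Fin n → ℂ) :
    (∫ k : OG (2 * n),
        sphInt n μ s (g * (k : Matrix (Fin (2 * n)) (Fin (2 * n)) ℝ) * (g' * g'ᵀ) *
          (k : Matrix (Fin (2 * n)) (Fin (2 * n)) ℝ)ᵀ * gᵀ) ∂μ) =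
      sphInt n μ s (g * gᵀ) * sphInt n μ s (g' * g'ᵀ) := by
  set S := g' * g'ᵀ with hS
  have hdef : ∀ X, sphInt n μ s X = ∫ k : OG (2 * n), auxP n s
      ((k : Matrix (Fin (2 * n)) (Fin (2 * n)) ℝ) * X *
        (k : Matrix (Fin (2 * n)) (Fin (2 * n)) ℝ)ᵀ) ∂μ := fun X => rfl
  have e1 : ∀ k h : Matrix (Fin (2 * n)) (Fin (2 * n)) ℝ,
      h * (g * k * S * kᵀ * gᵀ) * hᵀ = (h * g) * (k * S * kᵀ) * (h * g)ᵀ := by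
    intro k h
    simp only [transpose_mul, Matrix.mul_assoc]
  have e2 : ∀ k h : Matrix (Fin (2 * n)) (Fin (2 * n)) ℝ,
      (h * g) * (k * S * kᵀ) * (h * g)ᵀ = (h * g * k * g') * (h * g * k * g')ᵀ := by
    intro k h
    simp only [hS, transpose_mul, Matrix.mul_assoc]
  simp only [hdef, e1]
  rw [integral_integral_swap]
  · rw [← integral_mul_const]
    congr 1
    ext h
    obtain ⟨q, hq⟩ := auxP_factor n s ((h : Matrix (Fin (2 * n)) (Fin (2 * n)) ℝ) * g)
      ((aux_unit h).mul hg)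
    simp only [hq]
    rw [integral_const_mul]
    congr 1
    · congr 1
      simp only [transpose_mul, Matrix.mul_assoc]
    · symm
      rw [← integral_mul_left_eq_self _ q]
      congr 1
      ext k
      congr 1
      simp only [Submonoid.coe_mul, transpose_mul, Matrix.mul_assoc]
  · refine Continuous.integrable_of_hasCompactSupport ?_ (HasCompactSupport.of_compactSpace _)
    simp only [Function.uncurry_def, e2]
    refine auxP_cont n s _ ?_ ?_
    · have c1 : Continuous fun a : OG (2 * n) × OG (2 * n) =>
          (a.1 : Matrix (Fin (2 * n)) (Fin (2 * n)) ℝ) := continuous_subtype_val.comp continuous_fst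
      have c2 : Continuous fun a : OG (2 * n) × OG (2 * n) =>
          (a.2 : Matrix (Fin (2 * n)) (Fin (2 * n)) ℝ) := continuous_subtype_val.comp continuous_snd
      exact ((c2.matrix_mul continuous_const).matrix_mul c1).matrix_mul continuous_const
    · intro y
      exact (((aux_unit y.2).mul hg).mul (aux_unit y.1)).mul hg'

end
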